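/- Assume condition (LD1). Then for any real numbers a < b, P(a ≤ W ≤ b) ≤ 0.625(b − a) + 4r₂ + 2.125r₃ + 4r₅, where r₂ = Σ_{i∈𝒥} E|X_iY_i|·1{|Y_i|>1}, r₃ = Σ_{i∈𝒥} E|X_i|(Y_i² ∧ 1), and r₅ = ∫_{|t|≤1} Var(K̂(t)) dt. -/

import Mathlib

open MeasureTheory ProbabilityTheory Real

/-!
Local dependence turns `E W f(W)` into `E ∫ f'(W + t) K̂(t) dt`. Take for `f'` a trapezoid of height
`1` over `[a, b]` with sides of width `α`, so that `|f| ≤ (b - a + α) / 2`. Since `E ∫ K̂ = 1`, the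
probability of `[a, b]` is at most `E f'(W) ∫ E K̂(t) dt`, and three errors separate this from the
Stein integral: the part `|t| > 1` of the kernel; the fluctuation of `K̂` about its mean, where
AM-GM splits the covariance with `f'(W + t)` into a variance and a multiple of `∫ f'`; and the shift
from `W` to `W + t`, which costs at most `|t| / α` times the concentration function of `W` at `α`.
For `α` slightly larger than `2 ∫ |t| E|K̂(t)| dt` the last error is at most half the concentration
function, so that the resulting inequality, applied first to intervals of length `α`, bounds the
concentration function by itself and thereby the last error for arbitrary `[a, b]`.
-/

section Trapezoid

open Set

/-- The continuous function which vanishes on `(-∞, c]`, equals `1` on `[c + α, ∞)` and is affine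
in between (for `0 < α`); the two sides of a trapezoid are ramps. -/
noncomputable def ramp (α c w : ℝ) : ℝ := max 0 (min (w - c) α) / α

/-- The continuous function which equals `1` on `[a, b]`, vanishes off `(a - α, b + α)` and is
affine in between (for `0 < α`): the smoothing of the indicator of `[a, b]` used as a test
function. -/
noncomputable def trapezoid (α a b w : ℝ) : ℝ := ramp α (a - α) w - ramp α b w

/-- An antiderivative of the trapezoid, normalised to be odd about the midpoint of `[a, b]`. The
trapezoid is the difference of a ramp and its translate by `b - a + α`, so a moving integral of
the ramp does. -/
noncomputable def trapezoidPrimitive (α a b w : ℝ) : ℝ :=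
  (∫ x in (w - (b - a + α))..w, ramp α (a - α) x) - (b - a + α) / 2

variable {α a b : ℝ}

lemma continuous_ramp (α c : ℝ) : Continuous (ramp α c) := by
  unfold ramp
  fun_prop

lemma ramp_nonneg (hα : 0 < α) (c w : ℝ) : 0 ≤ ramp α c w :=
  div_nonneg (le_max_left _ _) hα.le

lemma ramp_le_one (hα : 0 < α) (c w : ℝ) : ramp α c w ≤ 1 :=
  (div_le_one hα).2 (max_le hα.le (min_le_right _ _))

lemma ramp_sub_ramp (hα : 0 < α) (c x y : ℝ) :
    ramp α c y - ramp α c x = (∫ s in x..y, (Icc c (c + α)).indicator 1 s) / α := by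
  wlog hxy : x ≤ y generalizing x y
  · rw [intervalIntegral.integral_symm, neg_div, ← this y x (le_of_not_ge hxy), neg_sub]
  rw [intervalIntegral.integral_of_le hxy, ← integral_Icc_eq_integral_Ioc,
    setIntegral_indicator measurableSet_Icc, Icc_inter_Icc, ramp, ramp, ← sub_div]
  simp only [Pi.one_apply, setIntegral_const, volume_real_Icc, smul_eq_mul, mul_one]
  congr 1
  grind

lemma trapezoid_nonneg (hab : a ≤ b) (hα : 0 < α) (w : ℝ) : 0 ≤ trapezoid α a b w := by
  rw [trapezoid, ramp, ramp, ← sub_div]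
  exact div_nonneg (by grind) hα.le

lemma trapezoid_le_indicator (hα : 0 < α) (a b w : ℝ) :
    trapezoid α a b w ≤ (Icc (a - α) (b + α)).indicator 1 w := by
  rw [trapezoid, ramp, ramp, ← sub_div, div_le_iff₀ hα, indicator_apply, Pi.one_apply]
  split_ifs with hw <;> grind

lemma indicator_le_trapezoid (hab : a ≤ b) (hα : 0 < α) (w : ℝ) :
    (Icc a b).indicator 1 w ≤ trapezoid α a b w := by
  rw [trapezoid, ramp, ramp, ← sub_div, le_div_iff₀ hα, indicator_apply, Pi.one_apply]
  split_ifs with hw <;> grind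

lemma trapezoid_le_one (hα : 0 < α) (a b w : ℝ) : trapezoid α a b w ≤ 1 :=
  (trapezoid_le_indicator hα a b w).trans (indicator_le_self' (fun _ _ => zero_le_one) w)

lemma continuous_trapezoid (α a b : ℝ) : Continuous (trapezoid α a b) :=
  (continuous_ramp _ _).sub (continuous_ramp _ _)

lemma integrable_indicator_one_Icc (x y : ℝ) : Integrable ((Icc x y).indicator (1 : ℝ → ℝ)) :=
  (integrable_indicator_iff measurableSet_Icc).2 (integrableOn_const (by simp))

lemma integrable_trapezoid (hab : a ≤ b) (hα : 0 < α) : Integrable (trapezoid α a b) := by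
  refine (integrable_indicator_one_Icc (a - α) (b + α)).mono'
    (continuous_trapezoid _ _ _).aestronglyMeasurable (.of_forall fun w => ?_)
  rw [norm_of_nonneg (trapezoid_nonneg hab hα w)]
  exact trapezoid_le_indicator hα a b w

lemma integral_trapezoid_le (hab : a ≤ b) (hα : 0 < α) :
    ∫ w, trapezoid α a b w ≤ b - a + 2 * α := by
  calc ∫ w, trapezoid α a b w ≤ ∫ w, (Icc (a - α) (b + α)).indicator 1 w :=
        integral_mono (integrable_trapezoid hab hα) (integrable_indicator_one_Icc _ _)
          (trapezoid_le_indicator hα a b)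
    _ = b - a + 2 * α := by
        rw [integral_indicator_one measurableSet_Icc, volume_real_Icc_of_le (by linarith)]
        ring

lemma hasDerivAt_trapezoidPrimitive (α a b w : ℝ) :
    HasDerivAt (trapezoidPrimitive α a b) (trapezoid α a b w) w := by
  have hramp := continuous_ramp α (a - α)
  have hshift : ramp α b w = ramp α (a - α) (w - (b - a + α)) := by
    simp only [ramp]
    ring_nf
  have hprim (x : ℝ) := (hramp.integral_hasStrictDerivAt 0 x).hasDerivAt
  rw [trapezoid, hshift]
  refine (((hprim w).sub ((hprim _).comp_sub_const w _)).sub_const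
    ((b - a + α) / 2)).congr_of_eventuallyEq (.of_forall fun x => ?_)
  simp only [trapezoidPrimitive, Pi.sub_apply]
  rw [intervalIntegral.integral_interval_sub_left] <;> exact hramp.intervalIntegrable _ _

lemma abs_trapezoidPrimitive_le (hab : a ≤ b) (hα : 0 < α) (w : ℝ) :
    |trapezoidPrimitive α a b w| ≤ (b - a + α) / 2 := by
  have hle : w - (b - a + α) ≤ w := by linarith
  have hnonneg : 0 ≤ ∫ x in (w - (b - a + α))..w, ramp α (a - α) x :=
    intervalIntegral.integral_nonneg hle fun x _ => ramp_nonneg hα _ x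
  have hlength : ∫ x in (w - (b - a + α))..w, ramp α (a - α) x ≤ b - a + α := by
    simpa using intervalIntegral.integral_mono_on hle
      ((continuous_ramp _ _).intervalIntegrable (μ := volume) _ _) intervalIntegrable_const
      fun x _ => ramp_le_one hα (a - α) x
  rw [trapezoidPrimitive, abs_le]
  constructor <;> linarith

lemma deriv_trapezoidPrimitive (α a b : ℝ) :
    deriv (trapezoidPrimitive α a b) = trapezoid α a b :=
  funext fun w => (hasDerivAt_trapezoidPrimitive α a b w).deriv

lemma contDiff_trapezoidPrimitive (α a b : ℝ) : ContDiff ℝ 1 (trapezoidPrimitive α a b) :=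
  contDiff_one_iff_deriv.2 ⟨fun w => (hasDerivAt_trapezoidPrimitive α a b w).differentiableAt,
    deriv_trapezoidPrimitive α a b ▸ continuous_trapezoid α a b⟩

end Trapezoid

section LevyConcentration

open Set

/-- The Lévy concentration function of a measure on `ℝ`: the largest mass of a closed interval of
length `r`. It controls how the integral of a trapezoid changes under translation. -/
noncomputable def levyConcentration (ν : Measure ℝ) (r : ℝ) : ℝ := ⨆ x, ν.real (Icc x (x + r))

variable {ν : Measure ℝ} {α a b : ℝ}

lemma levyConcentration_nonneg (ν : Measure ℝ) (r : ℝ) : 0 ≤ levyConcentration ν r :=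
  iSup_nonneg fun _ => measureReal_nonneg

lemma measureReal_Icc_le_levyConcentration [IsFiniteMeasure ν] (x r : ℝ) :
    ν.real (Icc x (x + r)) ≤ levyConcentration ν r :=
  le_ciSup (f := fun x => ν.real (Icc x (x + r)))
    ⟨ν.real univ, forall_mem_range.2 fun _ => measureReal_mono (subset_univ _)⟩ x

lemma integrable_ramp_comp_add [IsFiniteMeasure ν] (hα : 0 < α) (c t : ℝ) :
    Integrable (fun x => ramp α c (x + t)) ν :=
  .of_bound ((continuous_ramp α c).comp (continuous_add_const t)).aestronglyMeasurable 1 <|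
    .of_forall fun x => by
      rw [norm_of_nonneg (ramp_nonneg hα _ _)]
      exact ramp_le_one hα _ _

lemma integral_indicator_Icc_add (c α s : ℝ) :
    ∫ x, (Icc c (c + α)).indicator 1 (x + s) ∂ν = ν.real (Icc (c - s) (c - s + α)) := by
  rw [← integral_indicator_one measurableSet_Icc]
  congr! 2 with x
  simp only [indicator_apply, mem_Icc, Pi.one_apply]
  grind

lemma integrable_indicator_Icc_add [IsFiniteMeasure ν] (c α t : ℝ) :
    Integrable (Function.uncurry fun s x => (Icc c (c + α)).indicator (1 : ℝ → ℝ) (x + s))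
      ((volume.restrict (uIoc 0 t)).prod ν) := by
  have : IsFiniteMeasure (volume.restrict (uIoc 0 t)) := ⟨by simp [uIoc]⟩
  exact .of_bound ((measurable_one.indicator measurableSet_Icc).comp
    (measurable_snd.add measurable_fst)).aestronglyMeasurable 1
    (.of_forall fun _ => (norm_indicator_le_norm_self _ _).trans norm_one.le)

lemma intervalIntegrable_measureReal_Icc_sub [IsFiniteMeasure ν] (c α t : ℝ) :
    IntervalIntegrable (fun s => ν.real (Icc (c - s) (c - s + α))) volume 0 t := by
  rw [intervalIntegrable_iff]
  simp only [← integral_indicator_Icc_add]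
  exact (integrable_indicator_Icc_add c α t).integral_prod_left

lemma integral_ramp_add_sub [IsFiniteMeasure ν] (hα : 0 < α) (c t : ℝ) :
    (∫ x, ramp α c (x + t) ∂ν) - ∫ x, ramp α c x ∂ν =
      (∫ s in 0..t, ν.real (Icc (c - s) (c - s + α))) / α := by
  have hpoint (x : ℝ) : ramp α c (x + t) - ramp α c x =
      (∫ s in 0..t, (Icc c (c + α)).indicator 1 (x + s)) / α := by
    rw [ramp_sub_ramp hα,
      intervalIntegral.integral_comp_add_left (fun s => (Icc c (c + α)).indicator 1 s), add_zero]
  rw [← integral_sub (integrable_ramp_comp_add hα c t)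
    (by simpa using integrable_ramp_comp_add hα c 0)]
  simp only [hpoint, ← integral_indicator_Icc_add]
  rw [integral_div, intervalIntegral_integral_swap (integrable_indicator_Icc_add c α t)]

-- The two sides of the trapezoid pull in opposite directions, so their effects do not add up.
lemma abs_integral_trapezoid_add_sub_le [IsFiniteMeasure ν] (hα : 0 < α) (a b t : ℝ) :
    |(∫ x, trapezoid α a b (x + t) ∂ν) - ∫ x, trapezoid α a b x ∂ν| ≤
      levyConcentration ν α / α * |t| := by
  have hint (c s : ℝ) := integrable_ramp_comp_add (ν := ν) hα c s
  have hint₀ (c : ℝ) : Integrable (ramp α c) ν := by simpa using hint c 0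
  have hmass (c : ℝ) := intervalIntegrable_measureReal_Icc_sub (ν := ν) c α t
  have hbound (s : ℝ) :
      ‖ν.real (Icc (a - α - s) (a - α - s + α)) - ν.real (Icc (b - s) (b - s + α))‖ ≤
        levyConcentration ν α :=
    abs_sub_le_of_nonneg_of_le measureReal_nonneg (measureReal_Icc_le_levyConcentration _ _)
      measureReal_nonneg (measureReal_Icc_le_levyConcentration _ _)
  calc |(∫ x, trapezoid α a b (x + t) ∂ν) - ∫ x, trapezoid α a b x ∂ν|
      = |∫ s in 0..t, (ν.real (Icc (a - α - s) (a - α - s + α)) -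
          ν.real (Icc (b - s) (b - s + α)))| / α := by
        simp only [trapezoid]
        rw [integral_sub (hint _ _) (hint _ _), integral_sub (hint₀ _) (hint₀ _), sub_sub_sub_comm,
          integral_ramp_add_sub hα, integral_ramp_add_sub hα, ← sub_div,
          ← intervalIntegral.integral_sub (hmass _) (hmass _), abs_div, abs_of_pos hα]
    _ ≤ levyConcentration ν α * |t| / α := by
        gcongr
        simpa only [sub_zero, norm_eq_abs] using
          intervalIntegral.norm_integral_le_of_norm_le_const (a := 0) (b := t) fun s _ => hbound s
    _ = levyConcentration ν α / α * |t| := by ring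

lemma measureReal_Icc_le_integral_trapezoid [IsFiniteMeasure ν] (hab : a ≤ b) (hα : 0 < α) :
    ν.real (Icc a b) ≤ ∫ x, trapezoid α a b x ∂ν := by
  have hint (c : ℝ) : Integrable (ramp α c) ν := by
    simpa using integrable_ramp_comp_add (ν := ν) hα c 0
  rw [← integral_indicator_one measurableSet_Icc]
  exact integral_mono_of_nonneg (.of_forall (indicator_nonneg fun _ _ => zero_le_one))
    ((hint _).sub (hint _)) (.of_forall (indicator_le_trapezoid hab hα))

end LevyConcentration

section SteinKernel

open Set

variable {Ω : Type*} [MeasurableSpace Ω] {μ : Measure Ω} {W : Ω → ℝ} {K : ℝ → Ω → ℝ}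
  {f g : ℝ → ℝ} {s : Set ℝ} {D M : ℝ}

/-- `K` is a random Stein kernel of `W`: `E ∫ f'(W + t) K(t) dt = E W f(W)` for every Lipschitz
`C¹` function `f`. This is the role which `K̂` plays for a sum of locally dependent variables. -/
structure IsSteinKernel (μ : Measure Ω) (W : Ω → ℝ) (K : ℝ → Ω → ℝ) : Prop where
  integrable : Integrable (Function.uncurry K) (volume.prod μ)
  integral_eq : ∀ f : ℝ → ℝ, ContDiff ℝ 1 f → (∃ C, LipschitzWith C f) →
    ∫ t, ∫ ω, deriv f (W ω + t) * K t ω ∂μ = ∫ ω, W ω * f (W ω) ∂μ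

lemma IsSteinKernel.integral_integral (hK : IsSteinKernel μ W K) :
    ∫ t, ∫ ω, K t ω ∂μ = ∫ ω, W ω ^ 2 ∂μ := by
  simpa [pow_two] using hK.integral_eq id contDiff_id ⟨1, .id⟩

-- The variance of `G + 4 K` is nonnegative.
lemma integral_mul_integral_le [IsProbabilityMeasure μ] {G K : Ω → ℝ}
    (hGm : AEStronglyMeasurable G μ) (hG : ∀ ω, G ω ∈ Icc 0 1) (hK : MemLp K 2 μ) :
    μ[G] * μ[K] ≤ μ[G * K] + μ[G] / 8 + 2 * Var[K; μ] := by
  have hGbound (ω : Ω) : ‖G ω‖ ≤ 1 := (norm_of_nonneg (hG ω).1).trans_le (hG ω).2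
  have hGL : MemLp G 2 μ := .of_bound hGm 1 (.of_forall hGbound)
  have hvarG : Var[G; μ] ≤ μ[G] :=
    (variance_le_expectation_sq hGm).trans <|
      integral_mono hGL.integrable_sq (hGL.integrable one_le_two) fun ω =>
        pow_le_of_le_one (hG ω).1 (hG ω).2 two_ne_zero
  have hvar : 0 ≤ Var[G; μ] + 2 * (4 * cov[G, K; μ]) + 4 ^ 2 * Var[K; μ] := by
    rw [← variance_const_mul, ← covariance_const_mul_right, ← variance_add hGL (hK.const_mul 4)]
    exact variance_nonneg _ _
  rw [covariance_eq_sub hGL hK] at hvar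
  linarith

lemma measurePreserving_add_prod [IsProbabilityMeasure μ] (hW : Measurable W) :
    MeasurePreserving (fun p : ℝ × Ω => W p.2 + p.1) (volume.prod μ) volume :=
  measurePreserving_snd.comp <|
    ((MeasurePreserving.id μ).skew_product (g := fun ω t => W ω + t) (by fun_prop)
      (.of_forall fun ω => (measurePreserving_add_left volume (W ω)).map_eq)).comp
    Measure.measurePreserving_swap

lemma integrable_comp_add_prod [IsProbabilityMeasure μ] (hW : Measurable W) (hg : Integrable g) :
    Integrable (fun p : ℝ × Ω => g (W p.2 + p.1)) (volume.prod μ) :=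
  (measurePreserving_add_prod hW).integrable_comp_of_integrable hg

lemma integral_integral_comp_add [IsProbabilityMeasure μ] (hW : Measurable W)
    (hg : Integrable g) : ∫ t, ∫ ω, g (W ω + t) ∂μ = ∫ x, g x := by
  have hmp := measurePreserving_add_prod (μ := μ) hW
  rw [← integral_prod _ (integrable_comp_add_prod hW hg),
    ← integral_map hmp.aemeasurable (hmp.map_eq.symm ▸ hg.aestronglyMeasurable), hmp.map_eq]

lemma integrable_comp_add_mul (hW : Measurable W)
    (hK : Integrable (Function.uncurry K) (volume.prod μ)) (hgm : Measurable g)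
    (hg : ∀ x, ‖g x‖ ≤ M) :
    Integrable (Function.uncurry fun t ω => g (W ω + t) * K t ω) (volume.prod μ) :=
  hK.bdd_mul (hgm.comp ((hW.comp measurable_snd).add measurable_fst)).aestronglyMeasurable
    (.of_forall fun _ => hg _)

lemma norm_integral_comp_add_le_one [IsProbabilityMeasure μ] (hg : ∀ x, g x ∈ Icc 0 1) (t : ℝ) :
    ‖∫ ω, g (W ω + t) ∂μ‖ ≤ 1 := by
  simpa using norm_integral_le_of_norm_le_const (μ := μ) (C := 1) (.of_forall fun ω =>
    (norm_of_nonneg (hg (W ω + t)).1).trans_le (hg (W ω + t)).2)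

lemma integrable_integral_comp_add_mul [IsProbabilityMeasure μ] (hW : Measurable W)
    (hK : Integrable (Function.uncurry K) (volume.prod μ)) (hgm : Measurable g)
    (hg : ∀ x, g x ∈ Icc 0 1) :
    Integrable (fun t => (∫ ω, g (W ω + t) ∂μ) * ∫ ω, K t ω ∂μ) := by
  have hmeas : StronglyMeasurable fun p : ℝ × Ω => g (W p.2 + p.1) :=
    (hgm.comp ((hW.comp measurable_snd).add measurable_fst)).stronglyMeasurable
  exact hK.integral_prod_left.bdd_mul hmeas.integral_prod_right'.aestronglyMeasurable
    (.of_forall (norm_integral_comp_add_le_one hg))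

lemma setIntegral_integral_mul_integral_le [IsProbabilityMeasure μ] (hW : Measurable W)
    (hK : Integrable (Function.uncurry K) (volume.prod μ)) (hs : MeasurableSet s)
    (hKs : ∀ t ∈ s, MemLp (K t) 2 μ) (hvar : IntegrableOn (fun t => Var[K t; μ]) s)
    (hgm : Measurable g) (hg : ∀ x, g x ∈ Icc 0 1) (hgi : Integrable g) :
    ∫ t in s, (∫ ω, g (W ω + t) ∂μ) * ∫ ω, K t ω ∂μ ≤
      (∫ t in s, ∫ ω, g (W ω + t) * K t ω ∂μ) + (∫ x, g x) / 8 +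
        2 * ∫ t in s, Var[K t; μ] := by
  have hgnorm (x : ℝ) : ‖g x‖ ≤ 1 := (norm_of_nonneg (hg x).1).trans_le (hg x).2
  have hprod : Integrable fun t => ∫ ω, g (W ω + t) * K t ω ∂μ :=
    (integrable_comp_add_mul hW hK hgm hgnorm).integral_prod_left
  have hmean : Integrable fun t => ∫ ω, g (W ω + t) ∂μ :=
    (integrable_comp_add_prod hW hgi).integral_prod_left
  have hsum : Integrable fun t =>
      (∫ ω, g (W ω + t) * K t ω ∂μ) + (∫ ω, g (W ω + t) ∂μ) / 8 := hprod.add (hmean.div_const 8)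
  calc ∫ t in s, (∫ ω, g (W ω + t) ∂μ) * ∫ ω, K t ω ∂μ
      ≤ ∫ t in s, ((∫ ω, g (W ω + t) * K t ω ∂μ) + (∫ ω, g (W ω + t) ∂μ) / 8 +
          2 * Var[K t; μ]) := by
        refine setIntegral_mono_on (integrable_integral_comp_add_mul hW hK hgm hg).integrableOn
          (hsum.integrableOn.add (hvar.const_mul 2)) hs fun t ht => ?_
        exact integral_mul_integral_le (hgm.comp (hW.add_const t)).aestronglyMeasurable
          (fun ω => hg _) (hKs t ht)
    _ = (∫ t in s, ∫ ω, g (W ω + t) * K t ω ∂μ) + (∫ t in s, ∫ ω, g (W ω + t) ∂μ) / 8 +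
          2 * ∫ t in s, Var[K t; μ] := by
        rw [integral_add hsum.integrableOn (hvar.const_mul 2),
          integral_add hprod.integrableOn (hmean.div_const 8).integrableOn, integral_div,
          integral_const_mul]
    _ ≤ _ := by
        rw [← integral_integral_comp_add (μ := μ) hW hgi]
        gcongr _ + ?_ / 8 + _
        exact setIntegral_le_integral hmean (.of_forall fun t => integral_nonneg fun ω => (hg _).1)

lemma mul_setIntegral_integral_le [IsProbabilityMeasure μ] (hW : Measurable W)
    (hK : Integrable (Function.uncurry K) (volume.prod μ))
    (hKs : IntegrableOn (fun t => |t| * ∫ ω, |K t ω| ∂μ) s)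
    (hgm : Measurable g) (hg : ∀ x, g x ∈ Icc 0 1)
    (hD : ∀ t, |(∫ ω, g (W ω + t) ∂μ) - ∫ ω, g (W ω) ∂μ| ≤ D * |t|) :
    (∫ ω, g (W ω) ∂μ) * ∫ t in s, ∫ ω, K t ω ∂μ ≤
      (∫ t in s, (∫ ω, g (W ω + t) ∂μ) * ∫ ω, K t ω ∂μ) +
        D * ∫ t in s, |t| * ∫ ω, |K t ω| ∂μ := by
  have hmean := (integrable_integral_comp_add_mul hW hK hgm hg).integrableOn (s := s)
  rw [← integral_const_mul, ← integral_const_mul, ← integral_add hmean (hKs.const_mul D)]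
  refine integral_mono (hK.integral_prod_left.integrableOn.const_mul _)
    (hmean.add (hKs.const_mul D)) fun t => ?_
  have hprod := mul_le_mul (hD t) (abs_integral_le_integral_abs (f := K t) (μ := μ))
    (abs_nonneg _) ((abs_nonneg _).trans (hD t))
  rw [← abs_mul, sub_mul] at hprod
  linarith [neg_le_of_abs_le hprod]

lemma abs_setIntegral_integral_mul_le [SFinite μ]
    (hK : Integrable (Function.uncurry K) (volume.prod μ)) (hg : ∀ x, g x ∈ Icc 0 1)
    (s : Set ℝ) :
    |∫ t in s, ∫ ω, g (W ω + t) * K t ω ∂μ| ≤ ∫ t in s, ∫ ω, |K t ω| ∂μ := by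
  have hKabs : Integrable fun t => ∫ ω, |K t ω| ∂μ := hK.abs.integral_prod_left
  rw [← norm_eq_abs]
  refine norm_integral_le_of_norm_le hKabs.integrableOn
    (ae_restrict_of_ae (hK.prod_right_ae.mono fun t ht => ?_))
  refine norm_integral_le_of_norm_le (g := fun ω => |K t ω|) ht.abs (.of_forall fun ω => ?_)
  rw [norm_mul, norm_of_nonneg (hg _).1]
  exact mul_le_of_le_one_left (abs_nonneg _) (hg _).2

lemma integral_mul_comp_le [IsProbabilityMeasure μ] (hW2 : ∫ ω, W ω ^ 2 ∂μ = 1)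
    (hf : ∀ x, |f x| ≤ M) : ∫ ω, W ω * f (W ω) ∂μ ≤ M := by
  have hsq : Integrable (fun ω => W ω ^ 2) μ := .of_integral_ne_zero (by simp [hW2])
  have hM : 0 ≤ M := (abs_nonneg _).trans (hf 0)
  have hint : Integrable (fun ω => M * (1 + W ω ^ 2) / 2) μ :=
    (((integrable_const 1).add hsq).const_mul M).div_const 2
  have hle : ‖∫ ω, W ω * f (W ω) ∂μ‖ ≤ ∫ ω, M * (1 + W ω ^ 2) / 2 ∂μ := by
    refine norm_integral_le_of_norm_le hint (.of_forall fun ω => ?_)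
    rw [norm_mul, norm_eq_abs, norm_eq_abs]
    nlinarith [mul_le_mul_of_nonneg_left (hf (W ω)) (abs_nonneg (W ω)), sq_nonneg (|W ω| - 1),
      sq_abs (W ω)]
  rw [integral_div, integral_const_mul, integral_add (integrable_const 1) hsq, hW2] at hle
  simpa [one_add_one_eq_two] using (le_abs_self _).trans hle

section Concentration

variable [IsProbabilityMeasure μ] (hK : IsSteinKernel μ W K) (hW : Measurable W)
  (hW2 : ∫ ω, W ω ^ 2 ∂μ = 1) (hs : MeasurableSet s) (hKs : ∀ t ∈ s, MemLp (K t) 2 μ)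
  (hvar : IntegrableOn (fun t => Var[K t; μ]) s)
  (hKt : IntegrableOn (fun t => |t| * ∫ ω, |K t ω| ∂μ) s) {a b α : ℝ}
include hK hW hW2 hs hKs hvar hKt

lemma IsSteinKernel.integral_deriv_comp_le (hf : ContDiff ℝ 1 f)
    (hf' : ∀ x, deriv f x ∈ Icc 0 1) (hfi : Integrable (deriv f))
    (hD : ∀ t, |(∫ ω, deriv f (W ω + t) ∂μ) - ∫ ω, deriv f (W ω) ∂μ| ≤ D * |t|) :
    ∫ ω, deriv f (W ω) ∂μ ≤ (∫ ω, W ω * f (W ω) ∂μ) + (∫ x, deriv f x) / 8 +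
      2 * (∫ t in sᶜ, ∫ ω, |K t ω| ∂μ) + D * (∫ t in s, |t| * ∫ ω, |K t ω| ∂μ) +
      2 * ∫ t in s, Var[K t; μ] := by
  have hnorm (x : ℝ) : ‖deriv f x‖ ≤ 1 := (norm_of_nonneg (hf' x).1).trans_le (hf' x).2
  have hmeas : Measurable (deriv f) := (hf.continuous_deriv le_rfl).measurable
  have hone : (∫ t in s, ∫ ω, K t ω ∂μ) + ∫ t in sᶜ, ∫ ω, K t ω ∂μ = 1 :=
    (integral_add_compl hs hK.integrable.integral_prod_left).trans
      (hK.integral_integral.trans hW2)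
  have hstein : (∫ t in s, ∫ ω, deriv f (W ω + t) * K t ω ∂μ) +
      ∫ t in sᶜ, ∫ ω, deriv f (W ω + t) * K t ω ∂μ = ∫ ω, W ω * f (W ω) ∂μ :=
    (integral_add_compl hs
      (integrable_comp_add_mul hW hK.integrable hmeas hnorm).integral_prod_left).trans
    (hK.integral_eq f hf
      ⟨1, lipschitzWith_of_nnnorm_deriv_le (hf.differentiable one_ne_zero) hnorm⟩)
  have htail := abs_setIntegral_integral_mul_le (W := W) hK.integrable hf' sᶜ
  have hmass := abs_setIntegral_integral_mul_le (W := W) (g := fun _ => 1) hK.integrable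
    (fun _ => ⟨zero_le_one, le_rfl⟩) sᶜ
  simp only [one_mul] at hmass
  have hmass' : (∫ ω, deriv f (W ω) ∂μ) * ∫ t in sᶜ, ∫ ω, K t ω ∂μ ≤
      ∫ t in sᶜ, ∫ ω, |K t ω| ∂μ := by
    have h01 := norm_integral_comp_add_le_one (μ := μ) (W := W) hf' 0
    simp only [add_zero, norm_eq_abs] at h01
    refine (le_abs_self _).trans ?_
    rw [abs_mul]
    exact (mul_le_of_le_one_left (abs_nonneg _) h01).trans hmass
  have hcentre := mul_setIntegral_integral_le hW hK.integrable hKt hmeas hf' hD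
  have hcov := setIntegral_integral_mul_integral_le hW hK.integrable hs hKs hvar hmeas hf' hfi
  linear_combination hcentre + hcov + hstein + hmass' + neg_le_of_abs_le htail -
    (∫ ω, deriv f (W ω) ∂μ) * hone

lemma IsSteinKernel.map_Icc_le_add_levyConcentration (hab : a ≤ b) (hα : 0 < α)
    (hQ : 2 * ∫ t in s, |t| * ∫ ω, |K t ω| ∂μ ≤ α) :
    (μ.map W).real (Icc a b) ≤ 0.625 * (b - a) + 0.75 * α +
      2 * (∫ t in sᶜ, ∫ ω, |K t ω| ∂μ) + 2 * (∫ t in s, Var[K t; μ]) +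
      levyConcentration (μ.map W) α / 2 := by
  have : IsProbabilityMeasure (μ.map W) := Measure.isProbabilityMeasure_map hW.aemeasurable
  have hmap (t : ℝ) : ∫ x, trapezoid α a b (x + t) ∂(μ.map W) =
      ∫ ω, trapezoid α a b (W ω + t) ∂μ :=
    integral_map hW.aemeasurable
      ((continuous_trapezoid _ _ _).comp (continuous_add_const t)).aestronglyMeasurable
  have hmap₀ : ∫ x, trapezoid α a b x ∂(μ.map W) = ∫ ω, trapezoid α a b (W ω) ∂μ := by
    simpa using hmap 0
  have hD (t : ℝ) := abs_integral_trapezoid_add_sub_le (ν := μ.map W) hα a b t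
  simp only [hmap, hmap₀] at hD
  have hstein := hK.integral_deriv_comp_le hW hW2 hs hKs hvar hKt
    (contDiff_trapezoidPrimitive α a b)
    (deriv_trapezoidPrimitive α a b ▸ fun x =>
      ⟨trapezoid_nonneg hab hα x, trapezoid_le_one hα a b x⟩)
    (deriv_trapezoidPrimitive α a b ▸ integrable_trapezoid hab hα)
    (deriv_trapezoidPrimitive α a b ▸ hD)
  rw [deriv_trapezoidPrimitive, ← hmap₀] at hstein
  have hhalf : levyConcentration (μ.map W) α / α * (∫ t in s, |t| * ∫ ω, |K t ω| ∂μ) ≤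
      levyConcentration (μ.map W) α / 2 :=
    calc _ ≤ levyConcentration (μ.map W) α / α * (α / 2) := by
          gcongr
          · exact div_nonneg (levyConcentration_nonneg _ _) hα.le
          · linarith
      _ = levyConcentration (μ.map W) α / 2 := by field_simp
  linarith [measureReal_Icc_le_integral_trapezoid (ν := μ.map W) hab hα,
    integral_trapezoid_le hab hα, integral_mul_comp_le hW2 (abs_trapezoidPrimitive_le hab hα)]

-- At `b = a + α` the previous bound contains at most half of the concentration function.
lemma IsSteinKernel.levyConcentration_le (hα : 0 < α)
    (hQ : 2 * ∫ t in s, |t| * ∫ ω, |K t ω| ∂μ ≤ α) :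
    levyConcentration (μ.map W) α ≤ 2.75 * α + 4 * (∫ t in sᶜ, ∫ ω, |K t ω| ∂μ) +
      4 * ∫ t in s, Var[K t; μ] := by
  suffices h : levyConcentration (μ.map W) α ≤ 1.375 * α +
      2 * (∫ t in sᶜ, ∫ ω, |K t ω| ∂μ) + 2 * (∫ t in s, Var[K t; μ]) +
      levyConcentration (μ.map W) α / 2 by linarith
  refine ciSup_le fun x => ?_
  linarith [hK.map_Icc_le_add_levyConcentration hW hW2 hs hKs hvar hKt
    (le_add_of_nonneg_right hα.le : x ≤ x + α) hα hQ]

theorem IsSteinKernel.measureReal_preimage_Icc_le (hab : a ≤ b) :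
    μ.real (W ⁻¹' Icc a b) ≤ 0.625 * (b - a) + 4 * (∫ t in sᶜ, ∫ ω, |K t ω| ∂μ) +
      4.25 * (∫ t in s, |t| * ∫ ω, |K t ω| ∂μ) + 4 * ∫ t in s, Var[K t; μ] := by
  have hQ : 0 ≤ ∫ t in s, |t| * ∫ ω, |K t ω| ∂μ := integral_nonneg fun t => by positivity
  rw [← map_measureReal_apply hW measurableSet_Icc]
  refine le_of_forall_pos_le_add fun ε hε => ?_
  have hbound (α : ℝ) (hα : 2 * ∫ t in s, |t| * ∫ ω, |K t ω| ∂μ < α) :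
      (μ.map W).real (Icc a b) ≤ 0.625 * (b - a) + 4 * (∫ t in sᶜ, ∫ ω, |K t ω| ∂μ) +
        2.125 * α + 4 * ∫ t in s, Var[K t; μ] := by
    have hα₀ : 0 < α := (mul_nonneg zero_le_two hQ).trans_lt hα
    linarith [hK.map_Icc_le_add_levyConcentration hW hW2 hs hKs hvar hKt hab hα₀ hα.le,
      hK.levyConcentration_le hW hW2 hs hKs hvar hKt hα₀ hα.le]
  linarith [hbound _ (lt_add_of_pos_right _ (by positivity : 0 < ε / 3))]

end Concentration

end SteinKernel

section SignedIndicator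

open Set

/-- The indicator of `[-y, 0)` minus the indicator of `[0, -y]`, at most one of which is nonzero;
`h ↦ ∫ h(t) signedIndicator y t dt` is then the oriented integral of `h` from `-y` to `0`. -/
noncomputable def signedIndicator (y t : ℝ) : ℝ :=
  (if -y ≤ t ∧ t < 0 then 1 else 0) - (if 0 ≤ t ∧ t ≤ -y then 1 else 0)

lemma measurable_uncurry_signedIndicator : Measurable (Function.uncurry signedIndicator) := by
  refine .sub (.ite (.inter ?_ ?_) measurable_const measurable_const)
    (.ite (.inter ?_ ?_) measurable_const measurable_const)
  · exact measurableSet_le measurable_fst.neg measurable_snd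
  · exact measurableSet_lt measurable_snd measurable_const
  · exact measurableSet_le measurable_const measurable_snd
  · exact measurableSet_le measurable_snd measurable_fst.neg

lemma measurable_signedIndicator (y : ℝ) : Measurable (signedIndicator y) :=
  measurable_uncurry_signedIndicator.comp measurable_prodMk_left

lemma abs_signedIndicator_le_indicator (y t : ℝ) :
    |signedIndicator y t| ≤ (Icc (-|y|) |y|).indicator 1 t := by
  simp only [signedIndicator, indicator_apply, mem_Icc, Pi.one_apply]
  grind

lemma abs_signedIndicator_le_one (y t : ℝ) : |signedIndicator y t| ≤ 1 :=
  (abs_signedIndicator_le_indicator y t).trans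
    (indicator_le_self' (fun _ _ => zero_le_one) t)

lemma integrable_signedIndicator (y : ℝ) : Integrable (signedIndicator y) :=
  (integrable_indicator_one_Icc _ _).mono' (measurable_signedIndicator y).aestronglyMeasurable
    (.of_forall (abs_signedIndicator_le_indicator y))

lemma signedIndicator_ae_eq (y : ℝ) :
    signedIndicator y =ᵐ[volume] (Ioc (-y) 0).indicator 1 - (Ioc 0 (-y)).indicator 1 := by
  filter_upwards [volume.ae_ne 0, volume.ae_ne (-y)] with t ht₀ hty
  simp only [signedIndicator, Pi.sub_apply, indicator_apply, mem_Ioc, Pi.one_apply]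
  grind

lemma integral_mul_signedIndicator (h : ℝ → ℝ) (y : ℝ) :
    ∫ t, h t * signedIndicator y t = ∫ t in (-y)..0, h t := by
  have hae : (fun t => h t * signedIndicator y t) =ᵐ[volume]
      fun t => (Ioc (-y) 0).indicator h t - (Ioc 0 (-y)).indicator h t := by
    filter_upwards [signedIndicator_ae_eq y] with t ht
    simp [ht, indicator_apply, mul_sub]
  rw [integral_congr_ae hae]
  rcases le_total 0 y with hy | hy
  · rw [intervalIntegral.integral_of_le (by linarith), Ioc_eq_empty (by linarith : ¬0 < -y)]
    simp [integral_indicator]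
  · rw [intervalIntegral.integral_of_ge (by linarith), Ioc_eq_empty (by linarith : ¬-y < 0)]
    simp [integral_indicator, integral_neg]

lemma integral_abs_signedIndicator (y : ℝ) : ∫ t, |signedIndicator y t| = |y| := by
  have hint : ∫ t, signedIndicator y t = y := by
    simpa using integral_mul_signedIndicator (fun _ => 1) y
  rcases lt_or_ge 0 y with hy | hy
  · have habs (t : ℝ) : |signedIndicator y t| = signedIndicator y t := by grind [signedIndicator]
    simp only [habs, hint, abs_of_pos hy]
  · have habs (t : ℝ) : |signedIndicator y t| = -signedIndicator y t := by grind [signedIndicator]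
    simp only [habs, integral_neg, hint, abs_of_nonpos hy]

lemma setIntegral_compl_abs_signedIndicator_le (y : ℝ) :
    ∫ t in (Icc (-1) 1)ᶜ, |signedIndicator y t| ≤ if 1 < |y| then |y| else 0 := by
  split_ifs with hy
  · rw [← integral_abs_signedIndicator y]
    exact setIntegral_le_integral (integrable_signedIndicator y).abs
      (.of_forall fun _ => abs_nonneg _)
  · refine (setIntegral_eq_zero_of_forall_eq_zero fun t ht => ?_).le
    have hmem : t ∉ Icc (-|y|) |y| := fun h =>
      ht (Icc_subset_Icc (neg_le_neg (not_lt.1 hy)) (not_lt.1 hy) h)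
    simpa [hmem] using abs_signedIndicator_le_indicator y t

-- Restricting to `[-1, 1]` amounts to truncating `y`.
lemma setIntegral_abs_mul_abs_signedIndicator (y : ℝ) :
    ∫ t in Icc (-1) 1, |t| * |signedIndicator y t| = min (y ^ 2) 1 / 2 := by
  have htrunc (t : ℝ) : (Icc (-1) 1).indicator (fun t => |t| * |signedIndicator y t|) t =
      -t * signedIndicator (max (-1) (min y 1)) t := by
    simp only [signedIndicator, indicator_apply, mem_Icc]
    split_ifs <;> grind
  have hsq : max (-1) (min y 1) ^ 2 = min (y ^ 2) 1 := by
    rcases le_total (|y|) 1 with hy | hy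
    · rw [min_eq_left (abs_le.1 hy).2, max_eq_right (abs_le.1 hy).1,
        min_eq_left ((sq_le_one_iff_abs_le_one y).2 hy)]
    · rw [min_eq_right ((one_le_sq_iff_one_le_abs y).2 hy)]
      rcases le_abs.1 hy with hy | hy
      · simp [hy]
      · rw [max_eq_left ((min_le_left _ _).trans (by linarith))]
        norm_num
  rw [← integral_indicator measurableSet_Icc]
  simp only [htrunc]
  rw [integral_mul_signedIndicator, intervalIntegral.integral_neg, integral_id, ← hsq]
  ring

end SignedIndicator

section LocalKernel

open Set

variable {Ω ι : Type*} [Fintype ι] {X Y : ι → Ω → ℝ} {W : Ω → ℝ} {s : Set ℝ} {h f : ℝ → ℝ}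

/-- The kernel `K̂` of a family `X` whose dependence is carried by `Y`: it is a Stein kernel of the
sum of the `X i` as soon as each `X i` is independent of that sum minus `Y i`. -/
noncomputable def localKernel (X Y : ι → Ω → ℝ) (t : ℝ) (ω : Ω) : ℝ :=
  ∑ i, X i ω * signedIndicator (Y i ω) t

lemma abs_localKernel_le (X Y : ι → Ω → ℝ) (t : ℝ) (ω : Ω) :
    |localKernel X Y t ω| ≤ ∑ i, |X i ω| :=
  (Finset.abs_sum_le_sum_abs _ _).trans <| Finset.sum_le_sum fun i _ => by
    rw [abs_mul]
    exact mul_le_of_le_one_right (abs_nonneg _) (abs_signedIndicator_le_one _ _)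

lemma integral_deriv_mul_localKernel {C : NNReal} (hf : ContDiff ℝ 1 f) (hC : LipschitzWith C f)
    (X Y : ι → Ω → ℝ) (x : ℝ) (ω : Ω) :
    ∫ t, deriv f (x + t) * localKernel X Y t ω = ∑ i, X i ω * (f x - f (x - Y i ω)) := by
  have hcont : Continuous (deriv f) := hf.continuous_deriv le_rfl
  have hint (y : ℝ) : Integrable fun t => deriv f (x + t) * signedIndicator y t :=
    (integrable_signedIndicator y).bdd_mul
      (hcont.comp (continuous_const_add x)).aestronglyMeasurable
      (.of_forall fun _ => norm_deriv_le_of_lipschitz hC)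
  have hftc (y : ℝ) : ∫ t in (-y)..0, deriv f (x + t) = f x - f (x - y) := by
    rw [intervalIntegral.integral_comp_add_left (deriv f), add_zero, ← sub_eq_add_neg]
    exact intervalIntegral.integral_deriv_eq_sub
      (fun z _ => hf.differentiable one_ne_zero z) (hcont.intervalIntegrable _ _)
  simp only [localKernel, Finset.mul_sum, mul_left_comm (deriv f _)]
  rw [integral_finsetSum _ fun i _ => (hint (Y i ω)).const_mul (X i ω)]
  simp only [integral_const_mul, integral_mul_signedIndicator, hftc]

variable [MeasurableSpace Ω] {μ : Measure Ω}

lemma measurable_mul_signedIndicator {U V : Ω → ℝ} (hU : Measurable U) (hV : Measurable V) :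
    Measurable (Function.uncurry fun t ω => U ω * signedIndicator (V ω) t) :=
  (hU.comp measurable_snd).mul <|
    measurable_uncurry_signedIndicator.comp ((hV.comp measurable_snd).prodMk measurable_fst)

lemma integrable_mul_signedIndicator [SFinite μ] {U V : Ω → ℝ} (hU : Measurable U)
    (hV : Measurable V) (hUV : Integrable (fun ω => U ω * V ω) μ) :
    Integrable (Function.uncurry fun t ω => U ω * signedIndicator (V ω) t) (volume.prod μ) := by
  have hnorm (ω : Ω) : ∫ t, ‖U ω * signedIndicator (V ω) t‖ = ‖U ω * V ω‖ := by
    simp only [norm_mul, integral_const_mul, norm_eq_abs, integral_abs_signedIndicator]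
  rw [integrable_prod_iff' (measurable_mul_signedIndicator hU hV).aestronglyMeasurable]
  refine ⟨.of_forall fun ω => (integrable_signedIndicator (V ω)).const_mul (U ω), ?_⟩
  simp only [Function.uncurry_apply_pair, hnorm]
  exact hUV.norm

lemma measurable_localKernel (hX : ∀ i, Measurable (X i)) (hY : ∀ i, Measurable (Y i)) :
    Measurable (Function.uncurry (localKernel X Y)) :=
  Finset.measurable_fun_sum _ fun i _ => measurable_mul_signedIndicator (hX i) (hY i)

lemma integrable_localKernel [SFinite μ] (hX : ∀ i, Measurable (X i))
    (hY : ∀ i, Measurable (Y i)) (hXY : ∀ i, Integrable (fun ω => X i ω * Y i ω) μ) :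
    Integrable (Function.uncurry (localKernel X Y)) (volume.prod μ) :=
  integrable_finsetSum _ fun i _ => integrable_mul_signedIndicator (hX i) (hY i) (hXY i)

lemma memLp_comp_of_lipschitzWith [IsFiniteMeasure μ] {C : NNReal} (hC : LipschitzWith C f)
    (hW : MemLp W 2 μ) : MemLp (fun ω => f (W ω)) 2 μ := by
  have hsub : LipschitzWith C fun x => f x - f 0 := .of_dist_le_mul fun x y => by
    simpa only [dist_sub_right] using hC.dist_le_mul x y
  have hfsub : MemLp (fun ω => f (W ω) - f 0) 2 μ := hsub.comp_memLp (sub_self _) hW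
  exact (hfsub.add (memLp_const (f 0))).ae_eq (.of_forall fun _ => sub_add_cancel _ _)

lemma integral_mul_comp_sub_of_indepFun {C : NNReal} {U V : Ω → ℝ} (hU : MemLp U 2 μ)
    (hU₀ : μ[U] = 0) (hindep : IndepFun U V μ) (hV : Measurable V) (hC : LipschitzWith C f)
    (hfW : MemLp (fun ω => f (W ω)) 2 μ)
    (hint : Integrable (fun ω => U ω * (f (W ω) - f (V ω))) μ) :
    ∫ ω, U ω * (f (W ω) - f (V ω)) ∂μ = ∫ ω, U ω * f (W ω) ∂μ := by
  have hUW : Integrable (fun ω => U ω * f (W ω)) μ := hU.integrable_mul hfW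
  have hzero : ∫ ω, U ω * f (V ω) ∂μ = 0 := by
    have hprod := (hindep.comp measurable_id hC.continuous.measurable).integral_mul_eq_mul_integral
      hU.aestronglyMeasurable (hC.continuous.measurable.comp hV).aestronglyMeasurable
    simpa [hU₀] using hprod
  have hUV : Integrable (fun ω => U ω * f (V ω)) μ :=
    (hUW.sub hint).congr (.of_forall fun ω => by simp [mul_sub])
  simp only [mul_sub]
  rw [integral_sub hUW hUV, hzero, sub_zero]

theorem isSteinKernel_localKernel [IsFiniteMeasure μ] (hXm : ∀ i, Measurable (X i))
    (hX : ∀ i, MemLp (X i) 2 μ) (hX₀ : ∀ i, μ[X i] = 0) (hY : ∀ i, Measurable (Y i))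
    (hXY : ∀ i, Integrable (fun ω => X i ω * Y i ω) μ) (hW : ∀ ω, W ω = ∑ i, X i ω)
    (hindep : ∀ i, IndepFun (X i) (fun ω => W ω - Y i ω) μ) :
    IsSteinKernel μ W (localKernel X Y) where
  integrable := integrable_localKernel hXm hY hXY
  integral_eq f hf := by
    rintro ⟨C, hC⟩
    have hWm : Measurable W := funext hW ▸ Finset.measurable_fun_sum _ fun i _ => hXm i
    have hfW : MemLp (fun ω => f (W ω)) 2 μ :=
      memLp_comp_of_lipschitzWith hC (funext hW ▸ memLp_finsetSum _ fun i _ => hX i)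
    have hXfW (i : ι) : Integrable (fun ω => X i ω * f (W ω)) μ := (hX i).integrable_mul hfW
    have hdiff (i : ι) : Integrable (fun ω => X i ω * (f (W ω) - f (W ω - Y i ω))) μ := by
      refine ((hXY i).norm.const_mul C).mono' (by fun_prop) (.of_forall fun ω => ?_)
      have hlip := hC.dist_le_mul (W ω) (W ω - Y i ω)
      rw [dist_eq_norm, dist_eq_norm, sub_sub_cancel] at hlip
      rw [norm_mul, norm_mul, mul_left_comm]
      gcongr
    calc ∫ t, ∫ ω, deriv f (W ω + t) * localKernel X Y t ω ∂μ
        = ∫ ω, ∑ i, X i ω * (f (W ω) - f (W ω - Y i ω)) ∂μ := by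
          rw [integral_integral_swap <| integrable_comp_add_mul hWm
            (integrable_localKernel hXm hY hXY) (hf.continuous_deriv le_rfl).measurable
            fun x => norm_deriv_le_of_lipschitz hC]
          simp only [integral_deriv_mul_localKernel hf hC]
      _ = ∑ i, ∫ ω, X i ω * f (W ω) ∂μ := by
          rw [integral_finsetSum _ fun i _ => hdiff i]
          exact Finset.sum_congr rfl fun i _ => integral_mul_comp_sub_of_indepFun (hX i) (hX₀ i)
            (hindep i) (hWm.sub (hY i)) hC hfW (hdiff i)
      _ = ∫ ω, W ω * f (W ω) ∂μ := by
          simp only [← integral_finsetSum _ fun i _ => hXfW i, ← Finset.sum_mul, ← hW]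

lemma integrable_weight_mul [SFinite μ] {F : ℝ → Ω → ℝ}
    (hF : Integrable (Function.uncurry F) (volume.prod μ)) (hs : MeasurableSet s)
    (hhm : Measurable h) (hh : ∀ t ∈ s, h t ∈ Icc 0 1) :
    Integrable (Function.uncurry fun t ω => h t * F t ω) ((volume.restrict s).prod μ) := by
  have hbound : ∀ᵐ p ∂(volume.restrict s).prod μ, ‖h p.1‖ ≤ 1 := by
    have hs1 : ∀ᵐ t ∂volume.restrict s, ‖h t‖ ≤ 1 := ae_restrict_of_forall_mem hs fun t ht =>
      (norm_of_nonneg (hh t ht).1).trans_le (hh t ht).2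
    exact Measure.quasiMeasurePreserving_fst.ae hs1
  exact (hF.mono_measure (Measure.prod_mono Measure.restrict_le_self le_rfl)).bdd_mul
    (hhm.comp measurable_fst).aestronglyMeasurable hbound

lemma setIntegral_mul_integral_abs [SFinite μ] {U V : Ω → ℝ} (hU : Measurable U)
    (hV : Measurable V) (hUV : Integrable (fun ω => U ω * V ω) μ) (hs : MeasurableSet s)
    (hhm : Measurable h) (hh : ∀ t ∈ s, h t ∈ Icc 0 1) :
    ∫ t in s, h t * ∫ ω, |U ω * signedIndicator (V ω) t| ∂μ =
      ∫ ω, |U ω| * (∫ t in s, h t * |signedIndicator (V ω) t|) ∂μ := by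
  have hint := integrable_weight_mul (F := fun t ω => |U ω * signedIndicator (V ω) t|)
    (integrable_mul_signedIndicator hU hV hUV).abs hs hhm hh
  simp only [← integral_const_mul]
  rw [integral_integral_swap hint]
  simp only [abs_mul, mul_left_comm]

lemma integrableOn_mul_integral_abs [SFinite μ] {F : ℝ → Ω → ℝ}
    (hF : Integrable (Function.uncurry F) (volume.prod μ)) (hs : MeasurableSet s)
    (hhm : Measurable h) (hh : ∀ t ∈ s, h t ∈ Icc 0 1) :
    IntegrableOn (fun t => h t * ∫ ω, |F t ω| ∂μ) s := by
  simp only [← integral_const_mul]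
  exact (integrable_weight_mul (F := fun t ω => |F t ω|) hF.abs hs hhm hh).integral_prod_left

lemma memLp_mul_signedIndicator {U V : Ω → ℝ} (hU : MemLp U 2 μ) (hV : Measurable V) (t : ℝ) :
    MemLp (fun ω => U ω * signedIndicator (V ω) t) 2 μ := by
  have hmeas : Measurable fun ω => signedIndicator (V ω) t :=
    measurable_uncurry_signedIndicator.comp (hV.prodMk measurable_const)
  refine hU.of_le (hU.aestronglyMeasurable.mul hmeas.aestronglyMeasurable) (.of_forall fun ω => ?_)
  rw [norm_mul]
  exact mul_le_of_le_one_right (norm_nonneg _) (abs_signedIndicator_le_one _ _)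

lemma memLp_localKernel (hX : ∀ i, MemLp (X i) 2 μ) (hY : ∀ i, Measurable (Y i)) (t : ℝ) :
    MemLp (localKernel X Y t) 2 μ :=
  memLp_finsetSum _ fun i _ => memLp_mul_signedIndicator (hX i) (hY i) t

lemma setIntegral_mul_integral_abs_localKernel_le [IsFiniteMeasure μ]
    (hXm : ∀ i, Measurable (X i)) (hX : ∀ i, MemLp (X i) 2 μ) (hY : ∀ i, Measurable (Y i))
    (hXY : ∀ i, Integrable (fun ω => X i ω * Y i ω) μ) (hs : MeasurableSet s)
    (hhm : Measurable h) (hh : ∀ t ∈ s, h t ∈ Icc 0 1) :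
    ∫ t in s, h t * ∫ ω, |localKernel X Y t ω| ∂μ ≤
      ∑ i, ∫ ω, |X i ω| * (∫ t in s, h t * |signedIndicator (Y i ω) t|) ∂μ := by
  have hterm (i : ι) : IntegrableOn
      (fun t => h t * ∫ ω, |X i ω * signedIndicator (Y i ω) t| ∂μ) s :=
    integrableOn_mul_integral_abs (integrable_mul_signedIndicator (hXm i) (hY i) (hXY i)) hs hhm hh
  have hXt (i : ι) (t : ℝ) : Integrable (fun ω => |X i ω * signedIndicator (Y i ω) t|) μ :=
    ((memLp_mul_signedIndicator (hX i) (hY i) t).integrable one_le_two).abs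
  calc ∫ t in s, h t * ∫ ω, |localKernel X Y t ω| ∂μ
      ≤ ∫ t in s, ∑ i, h t * ∫ ω, |X i ω * signedIndicator (Y i ω) t| ∂μ := by
        refine setIntegral_mono_on
          (integrableOn_mul_integral_abs (integrable_localKernel hXm hY hXY) hs hhm hh)
          (integrable_finsetSum _ fun i _ => hterm i) hs fun t ht => ?_
        rw [← Finset.mul_sum, ← integral_finsetSum _ fun i _ => hXt i t]
        exact mul_le_mul_of_nonneg_left (integral_mono
          ((memLp_localKernel hX hY t).integrable one_le_two).abs
          (integrable_finsetSum _ fun i _ => hXt i t)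
          fun ω => Finset.abs_sum_le_sum_abs _ _) (hh t ht).1
    _ = ∑ i, ∫ ω, |X i ω| * (∫ t in s, h t * |signedIndicator (Y i ω) t|) ∂μ := by
        rw [integral_finsetSum _ fun i _ => hterm i]
        simp only [setIntegral_mul_integral_abs (hXm _) (hY _) (hXY _) hs hhm hh]

lemma setIntegral_compl_integral_abs_localKernel_le [IsFiniteMeasure μ]
    (hXm : ∀ i, Measurable (X i)) (hX : ∀ i, MemLp (X i) 2 μ) (hY : ∀ i, Measurable (Y i))
    (hXY : ∀ i, Integrable (fun ω => X i ω * Y i ω) μ) :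
    ∫ t in (Icc (-1) 1)ᶜ, ∫ ω, |localKernel X Y t ω| ∂μ ≤
      ∑ i, ∫ ω, (if 1 < |Y i ω| then |X i ω * Y i ω| else 0) ∂μ := by
  have hle := setIntegral_mul_integral_abs_localKernel_le (h := 1) hXm hX hY hXY
    measurableSet_Icc.compl measurable_one (fun t (_ : t ∈ (Icc (-1) 1)ᶜ) => ⟨zero_le_one, le_rfl⟩)
  simp only [Pi.one_apply, one_mul] at hle
  refine hle.trans (Finset.sum_le_sum fun i _ => ?_)
  refine integral_mono_of_nonneg (.of_forall fun ω => by positivity) ?_ (.of_forall fun ω => ?_)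
  · exact (hXY i).abs.indicator (measurableSet_lt measurable_const (hY i).abs)
  · refine (mul_le_mul_of_nonneg_left (setIntegral_compl_abs_signedIndicator_le (Y i ω))
      (abs_nonneg _)).trans_eq ?_
    simp only [mul_ite, mul_zero, abs_mul]

lemma abs_mem_Icc_zero_one {t : ℝ} (ht : t ∈ Icc (-1) 1) : |t| ∈ Icc 0 1 :=
  ⟨abs_nonneg t, abs_le.2 ht⟩

lemma setIntegral_abs_mul_integral_abs_localKernel_le [IsFiniteMeasure μ]
    (hXm : ∀ i, Measurable (X i)) (hX : ∀ i, MemLp (X i) 2 μ) (hY : ∀ i, Measurable (Y i))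
    (hXY : ∀ i, Integrable (fun ω => X i ω * Y i ω) μ) :
    ∫ t in Icc (-1) 1, |t| * ∫ ω, |localKernel X Y t ω| ∂μ ≤
      (∑ i, ∫ ω, |X i ω| * min (Y i ω ^ 2) 1 ∂μ) / 2 := by
  have hle := setIntegral_mul_integral_abs_localKernel_le hXm hX hY hXY
    measurableSet_Icc measurable_abs (fun t => abs_mem_Icc_zero_one)
  simpa only [setIntegral_abs_mul_abs_signedIndicator, ← mul_div_assoc, integral_div,
    ← Finset.sum_div] using hle

lemma measurable_variance {F : ℝ → Ω → ℝ} [IsProbabilityMeasure μ]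
    (hF : Measurable (Function.uncurry F)) (hF2 : ∀ t, MemLp (F t) 2 μ) :
    Measurable fun t => Var[F t; μ] := by
  have hvar (t : ℝ) : Var[F t; μ] = μ[F t ^ 2] - μ[F t] ^ 2 := variance_eq_sub (hF2 t)
  have hsq : StronglyMeasurable fun t => μ[F t ^ 2] :=
    (hF.pow_const 2).stronglyMeasurable.integral_prod_right'
  have hmean : StronglyMeasurable fun t => μ[F t] := hF.stronglyMeasurable.integral_prod_right'
  simp only [hvar]
  exact (hsq.sub (hmean.pow 2)).measurable

lemma integrableOn_variance_localKernel [IsProbabilityMeasure μ] (hXm : ∀ i, Measurable (X i))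
    (hX : ∀ i, MemLp (X i) 2 μ) (hY : ∀ i, Measurable (Y i)) (hs : volume s ≠ ⊤) :
    IntegrableOn (fun t => Var[localKernel X Y t; μ]) s := by
  have hsum : MemLp (fun ω => ∑ i, |X i ω|) 2 μ := memLp_finsetSum _ fun i _ => (hX i).abs
  refine (integrableOn_const (C := ∫ ω, (∑ i, |X i ω|) ^ 2 ∂μ) hs).mono'
    (measurable_variance (measurable_localKernel hXm hY)
      (memLp_localKernel hX hY)).aestronglyMeasurable (.of_forall fun t => ?_)
  rw [norm_of_nonneg (variance_nonneg _ _)]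
  refine (variance_le_expectation_sq (memLp_localKernel hX hY t).aestronglyMeasurable).trans <|
    integral_mono (memLp_localKernel hX hY t).integrable_sq hsum.integrable_sq fun ω => ?_
  exact sq_le_sq.2 <| (abs_localKernel_le X Y t ω).trans (le_abs_self _)

end LocalKernel

lemma indepFun_sum_sub_sum {Ω ι : Type*} [MeasurableSpace Ω] {μ : Measure Ω} [Fintype ι]
    [DecidableEq ι] {X : ι → Ω → ℝ} {U : Ω → ℝ} {A : Finset ι}
    (h : IndepFun U (fun ω => fun j : (Aᶜ : Finset ι) => X j.1 ω) μ) :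
    IndepFun U (fun ω => ∑ j, X j ω - ∑ j ∈ A, X j ω) μ := by
  have hcompl (ω : Ω) : ∑ j, X j ω - ∑ j ∈ A, X j ω = ∑ j : (Aᶜ : Finset ι), X j.1 ω := by
    rw [← Finset.sum_add_sum_compl A, add_sub_cancel_left, ← Finset.sum_coe_sort]
  simp only [hcompl]
  exact h.comp measurable_id
    (Finset.measurable_fun_sum Finset.univ fun j _ => measurable_pi_apply j)

theorem stmt_11_general {Ω : Type*} [MeasurableSpace Ω] {μ : Measure Ω} [IsProbabilityMeasure μ]
    {ι : Type*} [Fintype ι] {X Y : ι → Ω → ℝ} {W : Ω → ℝ}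
    (hXm : ∀ i, Measurable (X i)) (hX : ∀ i, MemLp (X i) 2 μ) (hX₀ : ∀ i, μ[X i] = 0)
    (hY : ∀ i, Measurable (Y i)) (hXY : ∀ i, Integrable (fun ω => X i ω * Y i ω) μ)
    (hW : ∀ ω, W ω = ∑ i, X i ω) (hindep : ∀ i, IndepFun (X i) (fun ω => W ω - Y i ω) μ)
    (hW2 : ∫ ω, W ω ^ 2 ∂μ = 1) {a b : ℝ} (hab : a ≤ b) :
    μ.real (W ⁻¹' Set.Icc a b) ≤ 0.625 * (b - a) +
      4 * (∑ i, ∫ ω, (if 1 < |Y i ω| then |X i ω * Y i ω| else 0) ∂μ) +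
      2.125 * (∑ i, ∫ ω, |X i ω| * min (Y i ω ^ 2) 1 ∂μ) +
      4 * ∫ t in Set.Icc (-1) 1, Var[localKernel X Y t; μ] := by
  have hWm : Measurable W := funext hW ▸ Finset.measurable_fun_sum _ fun i _ => hXm i
  have hbound := (isSteinKernel_localKernel hXm hX hX₀ hY hXY hW hindep).measureReal_preimage_Icc_le
    hWm hW2 measurableSet_Icc (fun t _ => memLp_localKernel hX hY t)
    (integrableOn_variance_localKernel hXm hX hY measure_Icc_lt_top.ne)
    (integrableOn_mul_integral_abs (integrable_localKernel hXm hY hXY) measurableSet_Icc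
      measurable_abs fun t => abs_mem_Icc_zero_one) hab
  linarith [setIntegral_compl_integral_abs_localKernel_le hXm hX hY hXY,
    setIntegral_abs_mul_integral_abs_localKernel_le hXm hX hY hXY]

theorem stmt_11
    {Ω : Type*} [MeasurableSpace Ω] {μ : Measure Ω} [IsProbabilityMeasure μ]
    {ι : Type*} [Fintype ι] [DecidableEq ι]
    (X : ι → Ω → ℝ) (A : ι → Finset ι)
    (hXmeas : ∀ i, Measurable (X i))
    (hXmean : ∀ i, ∫ ω, X i ω ∂μ = 0)
    (hXsq : ∀ i, Integrable (fun ω => (X i ω) ^ 2) μ)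
    (hiA : ∀ i, i ∈ A i)
    (hLD1 : ∀ i, IndepFun (X i) (fun ω => fun j : ((A i)ᶜ : Finset ι) => X j.1 ω) μ)
    (W : Ω → ℝ) (hW : ∀ ω, W ω = ∑ i, X i ω)
    (hWvar : ∫ ω, (W ω) ^ 2 ∂μ = 1)
    (Y : ι → Ω → ℝ) (hY : ∀ i ω, Y i ω = ∑ j ∈ A i, X j ω)
    (Khat : ℝ → Ω → ℝ)
    (hKhat : ∀ t ω, Khat t ω = ∑ i, X i ω *
      ((if -(Y i ω) ≤ t ∧ t < 0 then (1 : ℝ) else 0)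
        - (if 0 ≤ t ∧ t ≤ -(Y i ω) then (1 : ℝ) else 0)))
    (r2 r3 r5 : ℝ)
    (hr2 : r2 = ∑ i, ∫ ω, (if 1 < |Y i ω| then |X i ω * Y i ω| else 0) ∂μ)
    (hr3 : r3 = ∑ i, ∫ ω, |X i ω| * min ((Y i ω) ^ 2) 1 ∂μ)
    (hr5 : r5 = ∫ t in Set.Icc (-1 : ℝ) 1, variance (Khat t) μ) :
    ∀ a b : ℝ, a < b →
      (μ {ω | a ≤ W ω ∧ W ω ≤ b}).toReal ≤
        0.625 * (b - a) + 4 * r2 + 2.125 * r3 + 4 * r5 := by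
  intro a b hab
  have hX (i : ι) : MemLp (X i) 2 μ :=
    (memLp_two_iff_integrable_sq (hXmeas i).aestronglyMeasurable).2 (hXsq i)
  have hY2 (i : ι) : MemLp (Y i) 2 μ := funext (hY i) ▸ memLp_finsetSum _ fun j _ => hX j
  have hYm (i : ι) : Measurable (Y i) :=
    funext (hY i) ▸ Finset.measurable_fun_sum _ fun j _ => hXmeas j
  have hindep (i : ι) : IndepFun (X i) (fun ω => W ω - Y i ω) μ := by
    simpa only [hW, hY] using indepFun_sum_sub_sum (hLD1 i)
  obtain rfl : Khat = localKernel X Y := by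
    ext t ω
    exact hKhat t ω
  rw [hr2, hr3, hr5]
  exact stmt_11_general hXmeas hX hXmean hYm (fun i => (hX i).integrable_mul (hY2 i)) hW hindep
    hWvar hab.le
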